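/- Let H be a Hopf algebra over K, and equip H ⊗ H with the multiplication (h¹ # h²)(h³ # h⁴) = ∑ h¹ h²₍₁₎ h³ S(h²₍₂₎) # h²₍₃₎ h⁴. Then the map P_L(h # h') = ∑ S(h₍₂₎h'₍₂₎)·h₍₃₎ # S(h₍₁₎h'₍₁₎)h'₍₃₎, where x·y = ∑ x₍₁₎ y S(x₍₂₎) is the adjoint action (equivalently P_L(h # h') = ∑ S(h₍₃₎h'₍₃₎) h₍₄₎ S²(h₍₂₎h'₍₂₎) # S(h₍₁₎h'₍₁₎)h'₍₄₎), is an idempotent Rota-Baxter operator of weight -1 on this algebra. -/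

import Mathlib

/-!
STATEMENT 17: For a Hopf algebra `H`, equip `H ⊗ H` with the smash product
multiplication arising from the adjoint action,
`(h¹ # h²)(h³ # h⁴) = ∑ h¹ h²₍₁₎ h³ S(h²₍₂₎) # h²₍₃₎ h⁴`.
Then `P_L(h # h') = ∑ S(h₍₂₎h'₍₂₎)·h₍₃₎ # S(h₍₁₎h'₍₁₎)h'₍₃₎` (where `·` is the adjoint
action) is an idempotent Rota-Baxter operator of weight `-1` on this algebra.
`P_L` is built Sweedler-free from the iterated comultiplications of `h` and `h'`:
it is the specialization to `(V, ρ, act) = (H, Δ, adjoint action)` of the map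
`v # h ↦ ∑ S(v₍₋₁₎h₍₂₎)·v₍₀₎ # S(v₍₋₂₎h₍₁₎)h₍₃₎`.
-/

open TensorProduct Coalgebra HopfAlgebra LinearMap

/-- The adjoint action of a Hopf algebra on itself, `x · h = ∑ x₍₁₎ h S(x₍₂₎)`,
as a linear map `H ⊗ H →ₗ H`. -/
noncomputable def adjointAction (K : Type*) [Field K]
    (H : Type*) [Ring H] [HopfAlgebra K H] :
    H ⊗[K] H →ₗ[K] H :=
  (LinearMap.mul' K H) ∘ₗ
  (LinearMap.lTensor H (LinearMap.mul' K H)) ∘ₗ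
  (LinearMap.lTensor H (LinearMap.lTensor H (antipode (R := K) (A := H)))) ∘ₗ
  (LinearMap.lTensor H (TensorProduct.comm K H H).toLinearMap) ∘ₗ
  (TensorProduct.assoc K H H H).toLinearMap ∘ₗ
  (LinearMap.rTensor H (Coalgebra.comul (R := K) (A := H)))

/-- The smash product multiplication on `H ⊗ H` arising from the adjoint action:
`(h¹ # h²)(h³ # h⁴) = ∑ h¹ h²₍₁₎ h³ S(h²₍₂₎) # h²₍₃₎ h⁴`. -/
noncomputable def adSmashMul (K : Type*) [Field K]
    (H : Type*) [Ring H] [HopfAlgebra K H] :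
    (H ⊗[K] H) ⊗[K] (H ⊗[K] H) →ₗ[K] H ⊗[K] H :=
  (LinearMap.rTensor H (LinearMap.mul' K H)) ∘ₗ
  (TensorProduct.assoc K H H H).symm.toLinearMap ∘ₗ
  (LinearMap.lTensor H (TensorProduct.map (adjointAction K H) (LinearMap.mul' K H))) ∘ₗ
  (LinearMap.lTensor H (TensorProduct.tensorTensorTensorComm K H H H H).toLinearMap) ∘ₗ
  (TensorProduct.assoc K H (H ⊗[K] H) (H ⊗[K] H)).toLinearMap ∘ₗ
  (LinearMap.rTensor (H ⊗[K] H) (LinearMap.lTensor H (Coalgebra.comul (R := K) (A := H))))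

/-!
Let `Φ(a ⊗ b) = (a ⊗ 1) Δ(b)` be the Galois map of `H`. It is injective, and it turns the smash
product into the ordinary multiplication of `H ⊗ H`, because `b₍₁₎ c S(b₍₂₎) b₍₃₎ ⊗ b₍₄₎` collapses
to `Δ(b) (c ⊗ 1)`. It also intertwines the diagonal coaction `x ↦ x₍₋₁₎ ⊗ x₍₀₎` of `H` with the
coaction on the left factor. As `P_L(x) = (1 # S(x₍₋₁₎)) x₍₀₎`, conjugation by `Φ` transforms `P_L`
into `a ⊗ b ↦ Δ(S(a₍₁₎)) (a₍₂₎ ⊗ b) = 1 ⊗ S(a) b`, for which both claims are immediate.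
-/

section RotaBaxter

/-- `P` is a Rota–Baxter operator of weight `w` for the multiplication `μ`. The product is a bare
linear map, not a ring structure, so that the smash product can live on `H ⊗ H` next to the
standard multiplication. -/
def IsRotaBaxter {R A : Type*} [CommSemiring R] [AddCommMonoid A] [Module R A]
    (μ : A ⊗[R] A →ₗ[R] A) (w : R) (P : A →ₗ[R] A) : Prop :=
  ∀ x y : A, μ (P x ⊗ₜ P y) = P (μ (x ⊗ₜ P y)) + P (μ (P x ⊗ₜ y)) + w • P (μ (x ⊗ₜ y))

lemma IsRotaBaxter.of_injective {R A B : Type*} [CommSemiring R]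
    [AddCommMonoid A] [Module R A] [AddCommMonoid B] [Module R B]
    {μ : A ⊗[R] A →ₗ[R] A} {ν : B ⊗[R] B →ₗ[R] B} {w : R} {P : A →ₗ[R] A} {Q : B →ₗ[R] B}
    (hQ : IsRotaBaxter ν w Q) (Φ : A →ₗ[R] B) (hΦ : Function.Injective Φ)
    (map_mul : ∀ x y, Φ (μ (x ⊗ₜ y)) = ν (Φ x ⊗ₜ Φ y)) (map_op : ∀ x, Φ (P x) = Q (Φ x)) :
    IsRotaBaxter μ w P := fun x y => hΦ <| by
  simpa only [map_add, map_smul, map_mul, map_op] using hQ (Φ x) (Φ y)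

lemma isRotaBaxter_neg_one_of_map_mul {R A : Type*} [CommRing R] [NonUnitalNonAssocRing A]
    [Module R A] [SMulCommClass R A A] [IsScalarTower R A A] {P : A →ₗ[R] A}
    (mul_map : ∀ x y, P (x * P y) = P x * P y) (map_mul : ∀ x y, P (P x * y) = P (x * y)) :
    IsRotaBaxter (mul' R A) (-1) P := fun x y => by
  simp only [mul'_apply, mul_map, map_mul, neg_smul, one_smul, add_neg_cancel_right]

end RotaBaxter

section Convolution

open WithConv
open Algebra.TensorProduct (includeLeft includeRight)

variable {R H A : Type*} [CommSemiring R] [Semiring H] [Semiring A] [Algebra R A]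

lemma includeLeft_convMul_includeRight [Bialgebra R H] :
    toConv (includeLeft : H →ₐ[R] H ⊗[R] H).toLinearMap *
      toConv (includeRight : H →ₐ[R] H ⊗[R] H).toLinearMap = toConv comul := by
  ext x
  simp [(ℛ R x).convMul_apply, (ℛ R x).eq]

variable [HopfAlgebra R H]

lemma antipode_convMul_algHom (f : H →ₐ[R] A) :
    toConv (f.toLinearMap ∘ₗ antipode R) * toConv f.toLinearMap = 1 := by
  have h := algHom_comp_convMul_distrib f (toConv (antipode R (A := H))) (toConv .id)
  rw [antipode_mul_id] at h
  ext x
  simpa using (LinearMap.congr_fun h x).symm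

lemma algHom_convMul_antipode (f : H →ₐ[R] A) :
    toConv f.toLinearMap * toConv (f.toLinearMap ∘ₗ antipode R) = 1 := by
  have h := algHom_comp_convMul_distrib f (toConv .id) (toConv (antipode R (A := H)))
  rw [id_mul_antipode] at h
  ext x
  simpa using (LinearMap.congr_fun h x).symm

lemma comul_comp_antipode :
    toConv (comul ∘ₗ antipode R) =
      toConv ((includeRight : H →ₐ[R] H ⊗[R] H).toLinearMap ∘ₗ antipode R) *
        toConv ((includeLeft : H →ₐ[R] H ⊗[R] H).toLinearMap ∘ₗ antipode R) := by
  refine left_inv_eq_right_inv (antipode_convMul_algHom (Bialgebra.comulAlgHom R H)) ?_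
  rw [Bialgebra.toLinearMap_comulAlgHom, ← includeLeft_convMul_includeRight, mul_assoc,
    ← mul_assoc (toConv includeRight.toLinearMap), algHom_convMul_antipode, one_mul,
    algHom_convMul_antipode]

lemma comul_antipode_eq_sum {ι : Type*} {x : H} (𝓡 : Repr R x ι) :
    comul (antipode R x) =
      ∑ i ∈ 𝓡.index, antipode R (𝓡.right i) ⊗ₜ[R] antipode R (𝓡.left i) := by
  have h := LinearMap.congr_fun (congrArg ofConv (comul_comp_antipode (R := R) (H := H))) x
  simpa [← 𝓡.eq] using h

lemma comul_antipode_convMul_includeLeft :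
    toConv (comul ∘ₗ antipode R) * toConv (includeLeft : H →ₐ[R] H ⊗[R] H).toLinearMap =
      toConv ((includeRight : H →ₐ[R] H ⊗[R] H).toLinearMap ∘ₗ antipode R) := by
  rw [comul_comp_antipode, mul_assoc, antipode_convMul_algHom, mul_one]

end Convolution

section GaloisMap

open WithConv
open Algebra.TensorProduct (includeLeft includeRight)

/-- The `A`-linear extension `a ⊗ m ↦ a • f m` of an `R`-linear map; this is
`LinearMap.liftBaseChange` without commutativity of `A`. -/
noncomputable def extendScalars {R : Type*} (A : Type*) {M N : Type*} [CommSemiring R] [Semiring A]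
    [Algebra R A] [AddCommMonoid M] [Module R M] [AddCommMonoid N] [Module R N] [Module A N]
    [IsScalarTower R A N] (f : M →ₗ[R] N) : A ⊗[R] M →ₗ[A] N :=
  AlgebraTensorModule.lift (toSpanSingleton A (M →ₗ[R] N) f)

@[simp]
lemma extendScalars_tmul {R A M N : Type*} [CommSemiring R] [Semiring A] [Algebra R A]
    [AddCommMonoid M] [Module R M] [AddCommMonoid N] [Module R N] [Module A N]
    [IsScalarTower R A N] (f : M →ₗ[R] N) (a : A) (m : M) :
    extendScalars A f (a ⊗ₜ m) = a • f m := rfl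

variable {R H B : Type*} [CommSemiring R] [Semiring H] [Semiring B] [Algebra R B]

lemma smul_eq_tmul_one_mul [Algebra R H] (a : H) (z : H ⊗[R] B) :
    a • z = (a ⊗ₜ[R] (1 : B)) * z := by
  rw [← mul_one a, ← smul_eq_mul, ← smul_tmul', smul_mul_assoc,
    ← Algebra.TensorProduct.one_def, one_mul, smul_eq_mul, mul_one]

lemma extendScalars_comul [Bialgebra R H] (f : H →ₗ[R] H ⊗[R] B) (b : H) :
    extendScalars H f (comul b) =
      (toConv (includeLeft : H →ₐ[R] H ⊗[R] B).toLinearMap * toConv f) b := by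
  rw [(ℛ R b).convMul_apply, ← (ℛ R b).eq]
  simp [smul_eq_tmul_one_mul]

variable (R H) in
/-- The canonical map `a ⊗ b ↦ (a ⊗ 1) Δ(b)` of `H` viewed as a Hopf–Galois extension of `R`,
which carries the smash product to the ordinary multiplication of `H ⊗ H`. -/
noncomputable def galoisMap [Bialgebra R H] : H ⊗[R] H →ₗ[H] H ⊗[R] H :=
  extendScalars H comul

@[simp]
lemma galoisMap_tmul [Bialgebra R H] (a b : H) :
    galoisMap R H (a ⊗ₜ b) = a • comul b := rfl

-- The inverse is `a ⊗ b ↦ ∑ a S(b₍₁₎) ⊗ b₍₂₎`.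
lemma galoisMap_injective [HopfAlgebra R H] : Function.Injective (galoisMap R H) := by
  let inclL : H →ₐ[R] H ⊗[R] H := includeLeft
  let inclR : H →ₐ[R] H ⊗[R] H := includeRight
  let g := toConv (inclL.toLinearMap ∘ₗ antipode R) * toConv inclR.toLinearMap
  have inclL_conv_g : toConv inclL.toLinearMap * g = toConv inclR.toLinearMap := by
    rw [← mul_assoc, algHom_convMul_antipode, one_mul]
  have leftInv : extendScalars H g.ofConv ∘ₗ galoisMap R H = .id := by
    ext b
    have h := extendScalars_comul g.ofConv b
    rw [toConv_ofConv, inclL_conv_g] at h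
    simpa [inclR] using h
  exact Function.LeftInverse.injective (LinearMap.congr_fun leftInv)

end GaloisMap

section Coaction

variable (R H : Type*) [CommSemiring R] [Semiring H] [Bialgebra R H]

/-- The diagonal left coaction `a ⊗ b ↦ ∑ a₍₁₎b₍₁₎ ⊗ (a₍₂₎ ⊗ b₍₂₎)` of `H` on `H ⊗ H`. -/
noncomputable def diagCoaction : H ⊗[R] H →ₗ[R] H ⊗[R] (H ⊗[R] H) :=
  rTensor (H ⊗[R] H) (mul' R H) ∘ₗ comul

/-- The left coaction `a ⊗ b ↦ ∑ a₍₁₎ ⊗ (a₍₂₎ ⊗ b)` of `H` on `H ⊗ H`, as an algebra map. -/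
noncomputable def leftCoaction : H ⊗[R] H →ₐ[R] H ⊗[R] (H ⊗[R] H) :=
  (Algebra.TensorProduct.assoc R R R H H H).toAlgHom.comp
    (Algebra.TensorProduct.map (Bialgebra.comulAlgHom R H) (.id R H))

variable {R H}

lemma diagCoaction_tmul {ι κ : Type*} {a b : H} (𝓐 : Repr R a ι) (𝓑 : Repr R b κ) :
    diagCoaction R H (a ⊗ₜ b) = ∑ i ∈ 𝓐.index, ∑ j ∈ 𝓑.index,
      (𝓐.left i * 𝓑.left j) ⊗ₜ (𝓐.right i ⊗ₜ 𝓑.right j) := by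
  simp [diagCoaction, ← (𝓐.tmul 𝓑).eq, Finset.sum_product]

lemma leftCoaction_tmul {ι : Type*} {a : H} (𝓐 : Repr R a ι) (b : H) :
    leftCoaction R H (a ⊗ₜ b) = ∑ i ∈ 𝓐.index, 𝓐.left i ⊗ₜ (𝓐.right i ⊗ₜ b) := by
  simp [leftCoaction, ← 𝓐.eq, sum_tmul]

lemma leftCoaction_comul {ι : Type*} {b : H} (𝓑 : Repr R b ι) :
    leftCoaction R H (comul b) = ∑ j ∈ 𝓑.index, 𝓑.left j ⊗ₜ comul (𝓑.right j) := by
  have h : leftCoaction R H (comul b) = lTensor H comul (comul b) := coassoc_apply b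
  rw [h, ← 𝓑.eq, map_sum]
  simp only [lTensor_tmul]

lemma leftCoaction_galoisMap (x : H ⊗[R] H) :
    leftCoaction R H (galoisMap R H x) =
      lTensor H ((galoisMap R H).restrictScalars R) (diagCoaction R H x) := by
  induction x with
  | zero => simp
  | add x y hx hy => simp only [map_add, hx, hy]
  | tmul a b =>
    rw [galoisMap_tmul, smul_eq_tmul_one_mul, map_mul, leftCoaction_tmul (ℛ R a),
      leftCoaction_comul (ℛ R b), diagCoaction_tmul (ℛ R a) (ℛ R b)]
    simp [Finset.sum_mul_sum, smul_eq_tmul_one_mul]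

end Coaction

section LeftDivision

open WithConv

variable {R H : Type*} [CommSemiring R] [Semiring H] [HopfAlgebra R H]

variable (R H) in
/-- The operator `a ⊗ b ↦ 1 ⊗ S(a)b`, which corresponds to `P_L` under the Galois map. -/
noncomputable def leftDivision : H ⊗[R] H →ₗ[R] H ⊗[R] H :=
  mk R H H 1 ∘ₗ mul' R H ∘ₗ rTensor H (antipode R)

@[simp]
lemma leftDivision_tmul (a b : H) : leftDivision R H (a ⊗ₜ b) = 1 ⊗ₜ (antipode R a * b) := by
  simp [leftDivision]

lemma leftDivision_leftDivision (x : H ⊗[R] H) :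
    leftDivision R H (leftDivision R H x) = leftDivision R H x := by
  simp [leftDivision]

lemma leftDivision_mul_leftDivision (x y : H ⊗[R] H) :
    leftDivision R H (x * leftDivision R H y) = leftDivision R H x * leftDivision R H y := by
  induction x with
  | zero => simp
  | add x x' hx hx' => simp only [add_mul, map_add, hx, hx']
  | tmul a b => simp [leftDivision, mul_assoc]

lemma leftDivision_leftDivision_mul (x y : H ⊗[R] H) :
    leftDivision R H (leftDivision R H x * y) = leftDivision R H (x * y) := by
  induction x with
  | zero => simp
  | add x x' hx hx' => simp only [add_mul, map_add, hx, hx']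
  | tmul a b =>
    induction y with
    | zero => simp
    | add y y' hy hy' => simp only [mul_add, map_add, hy, hy']
    | tmul c d => simp [mul_assoc, antipode_mul_antidistrib]

lemma mul_comul_antipode_leftCoaction (x : H ⊗[R] H) :
    mul' R (H ⊗[R] H) (rTensor (H ⊗[R] H) (comul ∘ₗ antipode R) (leftCoaction R H x)) =
      leftDivision R H x := by
  induction x with
  | zero => simp
  | add x y hx hy => simp only [map_add, hx, hy]
  | tmul a b =>
    have h := LinearMap.congr_fun
      (congrArg ofConv (comul_antipode_convMul_includeLeft (R := R) (H := H))) a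
    calc
      _ = (∑ i ∈ (ℛ R a).index, comul (R := R) (antipode R ((ℛ R a).left i)) *
            ((ℛ R a).right i ⊗ₜ[R] 1)) * (1 ⊗ₜ b) := by
        simp [leftCoaction_tmul (ℛ R a), Finset.sum_mul, mul_assoc]
      _ = (1 ⊗ₜ antipode R a) * (1 ⊗ₜ b) := by
        congr 1
        simpa [← (ℛ R a).eq] using h
      _ = leftDivision R H (a ⊗ₜ b) := by simp

end LeftDivision

section SmashProduct

open WithConv
open Algebra.TensorProduct (includeLeft includeRight)

variable {K H : Type*} [Field K] [Ring H] [HopfAlgebra K H]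

lemma adjointAction_tmul {ι : Type*} {b : H} (𝓑 : Repr K b ι) (c : H) :
    adjointAction K H (b ⊗ₜ c) = ∑ i ∈ 𝓑.index, 𝓑.left i * (c * antipode K (𝓑.right i)) := by
  simp [adjointAction, ← 𝓑.eq, sum_tmul]

lemma adSmashMul_tmul {ι : Type*} {b : H} (𝓑 : Repr K b ι) (a c d : H) :
    adSmashMul K H ((a ⊗ₜ b) ⊗ₜ (c ⊗ₜ d)) =
      ∑ i ∈ 𝓑.index, (a * adjointAction K H (𝓑.left i ⊗ₜ c)) ⊗ₜ (𝓑.right i * d) := by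
  simp [adSmashMul, ← 𝓑.eq, sum_tmul, tmul_sum]

-- In `∑ b₍₁₎ c S(b₍₂₎) b₍₃₎ ⊗ b₍₄₎` the factor `S(b₍₂₎) b₍₃₎` cancels.
lemma sum_adjointAction_smul_comul {ι : Type*} {b : H} (𝓑 : Repr K b ι) (c : H) :
    ∑ i ∈ 𝓑.index, adjointAction K H (𝓑.left i ⊗ₜ c) • comul (R := K) (𝓑.right i) =
      comul b * (c ⊗ₜ 1) := by
  let inclL : H →ₐ[K] H ⊗[K] H := includeLeft
  let inclR : H →ₐ[K] H ⊗[K] H := includeRight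
  let adc := inclL.toLinearMap ∘ₗ adjointAction K H ∘ₗ (mk K H H).flip c
  have adc_eq : toConv adc =
      toConv inclL.toLinearMap * c • toConv (inclL.toLinearMap ∘ₗ antipode K) := by
    ext x
    rw [(ℛ K x).convMul_apply]
    simp [adc, inclL, adjointAction_tmul (ℛ K x), smul_tmul']
  have adc_convMul : toConv adc * toConv comul =
      toConv inclL.toLinearMap * c • toConv inclR.toLinearMap := by
    rw [adc_eq, ← includeLeft_convMul_includeRight, mul_assoc, smul_mul_assoc,
      ← mul_assoc (toConv (_ ∘ₗ _)), antipode_convMul_algHom, one_mul]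
  have h := LinearMap.congr_fun (congrArg ofConv adc_convMul) b
  simpa [← 𝓑.eq, adc, inclL, inclR, Finset.sum_mul, smul_eq_tmul_one_mul] using h

lemma galoisMap_adSmashMul (x y : H ⊗[K] H) :
    galoisMap K H (adSmashMul K H (x ⊗ₜ y)) = galoisMap K H x * galoisMap K H y := by
  induction x with
  | zero => simp
  | add x x' hx hx' => simp only [add_tmul, map_add, hx, hx', add_mul]
  | tmul a b =>
    induction y with
    | zero => simp
    | add y y' hy hy' => simp only [tmul_add, map_add, hy, hy', mul_add]
    | tmul c d =>
      calc
        _ = a • (∑ i ∈ (ℛ K b).index, adjointAction K H ((ℛ K b).left i ⊗ₜ c) •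
              comul (R := K) ((ℛ K b).right i)) * comul d := by
          simp [adSmashMul_tmul (ℛ K b), mul_smul, Finset.smul_sum, Finset.sum_mul,
            smul_mul_assoc]
        _ = a • (comul b * (c ⊗ₜ 1)) * comul d := by rw [sum_adjointAction_smul_comul]
        _ = galoisMap K H (a ⊗ₜ b) * galoisMap K H (c ⊗ₜ d) := by
          simp only [galoisMap_tmul, smul_eq_tmul_one_mul, mul_assoc]

variable (K H) in
/-- The operator `P_L(h # h') = ∑ S(h₍₂₎h'₍₂₎)·h₍₃₎ # S(h₍₁₎h'₍₁₎)h'₍₃₎` on the smash product,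
composed from the iterated comultiplications of `h` and `h'`. -/
noncomputable def smashPL : H ⊗[K] H →ₗ[K] H ⊗[K] H :=
  (LinearMap.lTensor H (LinearMap.mul' K H)) ∘ₗ
  (TensorProduct.leftComm K H H H).toLinearMap ∘ₗ
  (LinearMap.lTensor H
    ((LinearMap.rTensor H (adjointAction K H)) ∘ₗ
      (TensorProduct.assoc K H H H).symm.toLinearMap)) ∘ₗ
  (TensorProduct.map
    (antipode (R := K) (A := H) ∘ₗ LinearMap.mul' K H)
    (LinearMap.rTensor (H ⊗[K] H)
      (antipode (R := K) (A := H) ∘ₗ LinearMap.mul' K H))) ∘ₗ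
  (LinearMap.lTensor (H ⊗[K] H)
    (TensorProduct.tensorTensorTensorComm K H H H H).toLinearMap) ∘ₗ
  (TensorProduct.tensorTensorTensorComm K H (H ⊗[K] H) H (H ⊗[K] H)).toLinearMap ∘ₗ
  (TensorProduct.map
    ((LinearMap.lTensor H (Coalgebra.comul (R := K) (A := H))) ∘ₗ Coalgebra.comul)
    ((LinearMap.lTensor H (Coalgebra.comul (R := K) (A := H))) ∘ₗ Coalgebra.comul))

lemma adSmashMul_one_tmul_antipode {ι : Type*} {z : H} (𝓩 : Repr K z ι) (c d : H) :
    adSmashMul K H ((1 ⊗ₜ antipode K z) ⊗ₜ (c ⊗ₜ d)) = ∑ i ∈ 𝓩.index,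
      adjointAction K H (antipode K (𝓩.right i) ⊗ₜ c) ⊗ₜ (antipode K (𝓩.left i) * d) := by
  let 𝓢 : Repr K (antipode K z) ι :=
    ⟨𝓩.index, antipode K ∘ 𝓩.right, antipode K ∘ 𝓩.left, (comul_antipode_eq_sum 𝓩).symm⟩
  simp [adSmashMul_tmul 𝓢, 𝓢]

lemma smashPL_tmul {ι ι' κ κ' : Type*} {a b : H} (𝓐 : Repr K a ι) (𝓑 : Repr K b κ)
    (𝓐' : ∀ i, Repr K (𝓐.left i) ι') (𝓑' : ∀ j, Repr K (𝓑.left j) κ') :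
    smashPL K H (a ⊗ₜ b) = ∑ i ∈ 𝓐.index, ∑ j ∈ 𝓑.index, ∑ p ∈ (𝓐' i).index, ∑ q ∈ (𝓑' j).index,
      adjointAction K H (antipode K ((𝓐' i).right p * (𝓑' j).right q) ⊗ₜ 𝓐.right i) ⊗ₜ
        (antipode K ((𝓐' i).left p * (𝓑' j).left q) * 𝓑.right j) := by
  simp only [smashPL, comp_apply, map_tmul]
  rw [← coassoc_apply, ← coassoc_apply, ← 𝓐.eq, ← 𝓑.eq]
  simp only [map_sum, rTensor_tmul, sum_tmul, tmul_sum]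
  rw [Finset.sum_comm]
  refine Finset.sum_congr rfl fun i _ => Finset.sum_congr rfl fun j _ => ?_
  rw [← (𝓐' i).eq, ← (𝓑' j).eq]
  simp only [map_sum, sum_tmul, tmul_sum]
  rw [Finset.sum_comm]
  simp

lemma smashPL_eq : smashPL K H =
    adSmashMul K H ∘ₗ rTensor (H ⊗[K] H) (mk K H H 1 ∘ₗ antipode K) ∘ₗ diagCoaction K H := by
  ext a b
  simp only [AlgebraTensorModule.curry_apply, curry_apply, coe_restrictScalars, comp_apply]
  rw [smashPL_tmul (ℛ K a) (ℛ K b) (fun i => ℛ K ((ℛ K a).left i)) fun j => ℛ K ((ℛ K b).left j),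
    diagCoaction_tmul (ℛ K a) (ℛ K b)]
  simp only [map_sum, rTensor_tmul, comp_apply, mk_apply]
  refine Finset.sum_congr rfl fun i _ => Finset.sum_congr rfl fun j _ => ?_
  rw [adSmashMul_one_tmul_antipode ((ℛ K ((ℛ K a).left i)).mul (ℛ K ((ℛ K b).left j)))]
  simp [Finset.sum_product]

lemma galoisMap_smashPL (x : H ⊗[K] H) :
    galoisMap K H (smashPL K H x) = leftDivision K H (galoisMap K H x) := by
  have galoisMap_adSmashMul_antipode (w : H ⊗[K] (H ⊗[K] H)) :
      galoisMap K H (adSmashMul K H (rTensor (H ⊗[K] H) (mk K H H 1 ∘ₗ antipode K) w)) =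
        mul' K (H ⊗[K] H) (rTensor (H ⊗[K] H) (comul ∘ₗ antipode K)
          (lTensor H ((galoisMap K H).restrictScalars K) w)) := by
    induction w with
    | zero => simp
    | add w w' hw hw' => simp only [map_add, hw, hw']
    | tmul z y => simp [galoisMap_adSmashMul]
  rw [smashPL_eq, comp_apply, comp_apply, galoisMap_adSmashMul_antipode,
    ← leftCoaction_galoisMap, mul_comul_antipode_leftCoaction]

end SmashProduct

theorem adjoint_smashProduct_PL_isRotaBaxter_weight_neg_one_general
    (K : Type*) [Field K] (H : Type*) [Ring H] [HopfAlgebra K H] :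
    smashPL K H ∘ₗ smashPL K H = smashPL K H ∧
      IsRotaBaxter (adSmashMul K H) (-1) (smashPL K H) := by
  constructor
  · exact LinearMap.ext fun x => galoisMap_injective <| by
      simp only [comp_apply, galoisMap_smashPL, leftDivision_leftDivision]
  · have rotaBaxter_leftDivision : IsRotaBaxter (mul' K (H ⊗[K] H)) (-1) (leftDivision K H) :=
      isRotaBaxter_neg_one_of_map_mul leftDivision_mul_leftDivision leftDivision_leftDivision_mul
    exact rotaBaxter_leftDivision.of_injective ((galoisMap K H).restrictScalars K)
      galoisMap_injective galoisMap_adSmashMul galoisMap_smashPL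

theorem adjoint_smashProduct_PL_isRotaBaxter_weight_neg_one
    (K : Type*) [Field K] [CharZero K]
    (H : Type*) [Ring H] [HopfAlgebra K H] :
    -- P_L(h # h') = ∑ S(h₍₂₎h'₍₂₎)·h₍₃₎ # S(h₍₁₎h'₍₁₎)h'₍₃₎
    let PL : H ⊗[K] H →ₗ[K] H ⊗[K] H :=
      (LinearMap.lTensor H (LinearMap.mul' K H)) ∘ₗ
      (TensorProduct.leftComm K H H H).toLinearMap ∘ₗ
      (LinearMap.lTensor H
        ((LinearMap.rTensor H (adjointAction K H)) ∘ₗ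
          (TensorProduct.assoc K H H H).symm.toLinearMap)) ∘ₗ
      (TensorProduct.map
        (antipode (R := K) (A := H) ∘ₗ LinearMap.mul' K H)
        (LinearMap.rTensor (H ⊗[K] H)
          (antipode (R := K) (A := H) ∘ₗ LinearMap.mul' K H))) ∘ₗ
      (LinearMap.lTensor (H ⊗[K] H)
        (TensorProduct.tensorTensorTensorComm K H H H H).toLinearMap) ∘ₗ
      (TensorProduct.tensorTensorTensorComm K H (H ⊗[K] H) H (H ⊗[K] H)).toLinearMap ∘ₗ
      (TensorProduct.map
        ((LinearMap.lTensor H (Coalgebra.comul (R := K) (A := H))) ∘ₗ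
          Coalgebra.comul)
        ((LinearMap.lTensor H (Coalgebra.comul (R := K) (A := H))) ∘ₗ
          Coalgebra.comul))
    (PL ∘ₗ PL = PL) ∧
    (∀ x y : H ⊗[K] H,
      adSmashMul K H (PL x ⊗ₜ[K] PL y) =
        PL (adSmashMul K H (x ⊗ₜ[K] PL y)) +
        PL (adSmashMul K H (PL x ⊗ₜ[K] y)) +
        (-1 : K) • PL (adSmashMul K H (x ⊗ₜ[K] y))) :=
  adjoint_smashProduct_PL_isRotaBaxter_weight_neg_one_general K H
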